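/- Let Φ be a reduced crystallographic root system with base Δ = {α_1, …, α_r}, positive roots Φ⁺, and Weyl vector ρ. Let μ be a dominant integral weight, let γ ∈ Φ, and suppose α_j ∈ Δ satisfies ⟨ρ + μ + γ, α_j∨⟩ < 0; set p := −⟨ρ + μ + γ, α_j∨⟩. Then β := γ + p·α_j is either zero or a root of Φ. -/

import Mathlib

open scoped Classical RealInnerProductSpace

namespace RootPaper

variable {E : Type} [NormedAddCommGroup E] [InnerProductSpace ℝ E] [FiniteDimensional ℝ E]

/-- The Cartan pairing `⟨β, α∨⟩ = 2⟨β, α⟩/⟨α, α⟩`. -/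
noncomputable def cpair (β α : E) : ℝ := 2 * ⟪β, α⟫ / ⟪α, α⟫

/-- `Φ` is a reduced crystallographic root system in the real inner product space `E`. -/
structure IsRootSystem (Φ : Finset E) : Prop where
  nonzero : ∀ α ∈ Φ, α ≠ 0
  span : Submodule.span ℝ (Φ : Set E) = ⊤
  reduced : ∀ α ∈ Φ, ∀ t : ℝ, t • α ∈ Φ → t = 1 ∨ t = -1
  reflection_mem : ∀ α ∈ Φ, ∀ β ∈ Φ, β - cpair β α • α ∈ Φ
  crystallographic : ∀ α ∈ Φ, ∀ β ∈ Φ, ∃ n : ℤ, cpair β α = (n : ℝ)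

/-- `Δ` is a base (set of simple roots) of the root system `Φ`: a linearly independent
subset such that every root is a non-negative or non-positive integral combination of
elements of `Δ`. -/
structure IsBase (Φ Δ : Finset E) : Prop where
  subset : (Δ : Set E) ⊆ (Φ : Set E)
  indep : LinearIndependent ℝ (fun a : {x : E // x ∈ Δ} => (a : E))
  pos_neg : ∀ β ∈ Φ, (∃ c : E → ℕ, β = ∑ a ∈ Δ, (c a : ℝ) • a) ∨
    (∃ c : E → ℕ, β = -∑ a ∈ Δ, (c a : ℝ) • a)

/-- The positive roots of `Φ` relative to the base `Δ`. -/
noncomputable def posRoots (Φ Δ : Finset E) : Finset E :=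
  Φ.filter fun β => ∃ c : E → ℕ, β = ∑ a ∈ Δ, (c a : ℝ) • a

/-- The Weyl vector `ρ`, half the sum of the positive roots. -/
noncomputable def weylVector (Φ Δ : Finset E) : E := (2⁻¹ : ℝ) • ∑ β ∈ posRoots Φ Δ, β

theorem aux_coord {Φ Δ : Finset E} (hΔ : IsBase Φ Δ) {a : E} (ha : a ∈ Δ) :
    ∃ f : E →ₗ[ℝ] ℝ, ∀ c : E → ℝ, f (∑ b ∈ Δ, c b • b) = c a := by
  have hs := hΔ.indep
  let B := Module.Basis.span hs
  obtain ⟨g, hg⟩ := LinearMap.exists_extend (B.coord ⟨a, ha⟩)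
  refine ⟨g, fun c => ?_⟩
  have key : ∀ b : {x : E // x ∈ Δ}, g b = if b = ⟨a, ha⟩ then 1 else 0 := by
    intro b
    have h1 : g (B b : E) = B.coord ⟨a, ha⟩ (B b) := by rw [← hg]; rfl
    have h2 : ((B b : _) : E) = b := congrArg Subtype.val (Module.Basis.span_apply hs b)
    rw [h2] at h1
    rw [h1, Module.Basis.coord_apply, Module.Basis.repr_self, Finsupp.single_apply]
  rw [map_sum, Finset.sum_eq_single a]
  · rw [map_smul, key ⟨a, ha⟩]; simp
  · intro b hb hba
    rw [map_smul, key ⟨b, hb⟩]; simp [hba]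
  · intro h; exact absurd ha h

theorem cpair_add (x y α : E) : cpair (x + y) α = cpair x α + cpair y α := by
  unfold cpair; rw [inner_add_left]; ring

theorem cpair_smul (t : ℝ) (x α : E) : cpair (t • x) α = t * cpair x α := by
  unfold cpair; rw [real_inner_smul_left]; ring

theorem cpair_sum (S : Finset E) (α : E) : cpair (∑ b ∈ S, b) α = ∑ b ∈ S, cpair b α := by
  unfold cpair; rw [sum_inner, Finset.mul_sum, Finset.sum_div]

theorem cpair_self {α : E} (h : α ≠ 0) : cpair α α = 2 := by
  unfold cpair
  have : ⟪α, α⟫ ≠ 0 := inner_self_ne_zero.mpr h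
  field_simp

theorem cpair_refl {α : E} (h : α ≠ 0) (β : E) :
    cpair (β - cpair β α • α) α = - cpair β α := by
  rw [sub_eq_add_neg, ← neg_smul, cpair_add, cpair_smul, cpair_self h]; ring

theorem aux_perm {Φ Δ : Finset E} (hΦ : IsRootSystem Φ) (hΔ : IsBase Φ Δ)
    {α β : E} (hα : α ∈ Δ) (hβ : β ∈ (posRoots Φ Δ).erase α) :
    β - cpair β α • α ∈ (posRoots Φ Δ).erase α := by
  have hαΦ : α ∈ Φ := hΔ.subset hα
  have hα0 := hΦ.nonzero α hαΦ
  obtain ⟨hne, hβ⟩ := Finset.mem_erase.mp hβ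
  obtain ⟨hβΦ, c, hc⟩ := Finset.mem_filter.mp hβ
  have hex : ∃ a ∈ Δ, a ≠ α ∧ c a ≠ 0 := by
    by_contra! hcon
    have h1 : β = (c α : ℝ) • α := by
      rw [hc]
      apply Finset.sum_eq_single α
      · intro b hb hba; rw [hcon b hb hba]; simp
      · intro h; exact absurd hα h
    rcases hΦ.reduced α hαΦ (c α) (h1 ▸ hβΦ) with h | h
    · rw [h, one_smul] at h1; exact hne h1
    · have : (0:ℝ) ≤ c α := Nat.cast_nonneg _
      linarith
  obtain ⟨a, ha, haα, hca⟩ := hex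
  obtain ⟨f, hf⟩ := aux_coord hΔ ha
  have hfα : f α = 0 := by
    have := hf (fun b => if b = α then 1 else 0)
    simpa [hα, haα] using this
  have hfβ : 0 < f β := by
    have h1 : f β = c a := by rw [hc]; exact hf _
    rw [h1]; exact_mod_cast Nat.pos_of_ne_zero hca
  have hfi : f (β - cpair β α • α) = f β := by rw [map_sub, map_smul, hfα]; simp
  have hm := hΦ.reflection_mem α hαΦ β hβΦ
  refine Finset.mem_erase.mpr ⟨?_, Finset.mem_filter.mpr ⟨hm, ?_⟩⟩
  · intro h; rw [h, hfα] at hfi; linarith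
  · rcases hΔ.pos_neg _ hm with h | ⟨d, hd⟩
    · exact h
    · exfalso
      rw [hd, map_neg, hf (fun b => (d b : ℝ))] at hfi
      have : (0:ℝ) ≤ d a := Nat.cast_nonneg _
      linarith

theorem cpair_weyl {Φ Δ : Finset E} (hΦ : IsRootSystem Φ) (hΔ : IsBase Φ Δ)
    {α : E} (hα : α ∈ Δ) : cpair (weylVector Φ Δ) α = 1 := by
  have hαΦ : α ∈ Φ := hΔ.subset hα
  have hα0 := hΦ.nonzero α hαΦ
  have hpos : α ∈ posRoots Φ Δ := by
    refine Finset.mem_filter.mpr ⟨hαΦ, fun b => if b = α then 1 else 0, ?_⟩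
    simp [hα]
  have h0 : ∑ b ∈ (posRoots Φ Δ).erase α, cpair b α = 0 := by
    refine Finset.sum_involution (fun b _ => b - cpair b α • α) ?_ ?_ ?_ ?_
    · intro b _; rw [cpair_refl hα0]; ring
    · intro b _ hb h
      have h2 := cpair_refl hα0 b
      rw [h] at h2
      apply hb; linarith
    · intro b hb; exact aux_perm hΦ hΔ hα hb
    · intro b _
      simp only [cpair_refl hα0]
      simp
  unfold weylVector
  rw [cpair_smul, cpair_sum, ← Finset.add_sum_erase _ _ hpos, h0, cpair_self hα0]
  norm_num

theorem cpair_prop {Φ : Finset E} (hΦ : IsRootSystem Φ) {α γ : E} (hα : α ∈ Φ) (hγ : γ ∈ Φ)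
    (h : 4 ≤ cpair γ α * cpair α γ) : γ = α ∨ γ = -α := by
  have hα0 := hΦ.nonzero α hα
  have hγ0 := hΦ.nonzero γ hγ
  have pα : 0 < ⟪α, α⟫ := real_inner_self_pos.mpr hα0
  have pγ : 0 < ⟪γ, γ⟫ := real_inner_self_pos.mpr hγ0
  unfold cpair at h
  rw [real_inner_comm γ α, div_mul_div_comm, le_div_iff₀ (by positivity)] at h
  set t := ⟪γ, α⟫ / ⟪α, α⟫ with ht
  have e : γ - t • α = 0 := by
    rw [← real_inner_self_nonpos]
    have : ⟪γ - t • α, γ - t • α⟫ = ⟪γ, γ⟫ - ⟪γ, α⟫ * ⟪γ, α⟫ / ⟪α, α⟫ := by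
      simp only [inner_sub_left, inner_sub_right, real_inner_smul_left, real_inner_smul_right]
      rw [real_inner_comm γ α, ht]
      field_simp
      ring
    rw [this, sub_nonpos, le_div_iff₀ pα]
    have hc := real_inner_comm γ α
    first | nlinarith | (rw [hc] at *; nlinarith)
  have e' : γ = t • α := sub_eq_zero.mp e
  rcases hΦ.reduced α hα t (e' ▸ hγ) with h | h
  · left; rw [e', h, one_smul]
  · right; rw [e', h, neg_smul, one_smul]

/-- Let `μ` be a dominant integral weight, `γ ∈ Φ`, and suppose the
simple root `αj ∈ Δ` satisfies `⟨ρ + μ + γ, αj∨⟩ = -p < 0`.  Then `β := γ + p·αj` is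
either zero or a root of `Φ`. -/
theorem statement17 {Φ Δ : Finset E} (hΦ : IsRootSystem Φ) (hΔ : IsBase Φ Δ)
    {μ : E} (hμ : ∀ a ∈ Δ, ∃ n : ℕ, cpair μ a = (n : ℝ))
    {γ : E} (hγ : γ ∈ Φ) {αj : E} (hαj : αj ∈ Δ)
    (hneg : cpair (weylVector Φ Δ + μ + γ) αj < 0) :
    γ + (-(cpair (weylVector Φ Δ + μ + γ) αj)) • αj = 0 ∨
      γ + (-(cpair (weylVector Φ Δ + μ + γ) αj)) • αj ∈ Φ := by
  have hαΦ : αj ∈ Φ := hΔ.subset hαj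
  have hα0 := hΦ.nonzero αj hαΦ
  have hγ0 := hΦ.nonzero γ hγ
  obtain ⟨m, hm⟩ := hμ αj hαj
  obtain ⟨k, hk⟩ := hΦ.crystallographic αj hαΦ γ hγ
  obtain ⟨l, hl⟩ := hΦ.crystallographic γ hγ αj hαΦ
  have hp : cpair (weylVector Φ Δ + μ + γ) αj = ((1 + m + k : ℤ) : ℝ) := by
    rw [cpair_add, cpair_add, cpair_weyl hΦ hΔ hαj, hm, hk]; push_cast; ring
  rw [hp] at hneg ⊢
  have hneg' : (1 + m + k : ℤ) < 0 := by exact_mod_cast hneg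
  by_cases h4 : 4 ≤ cpair γ αj * cpair αj γ
  · rcases cpair_prop hΦ hαΦ hγ h4 with h | h
    · rw [h, cpair_self hα0] at hk
      have : k = 2 := by exact_mod_cast hk.symm
      omega
    · have h2 : cpair γ αj = -2 := by
        rw [h, ← neg_one_smul ℝ αj, cpair_smul, cpair_self hα0]; norm_num
      rw [hk] at h2
      have : k = -2 := by exact_mod_cast h2
      have hm0 : (1 + m + k : ℤ) = -1 := by omega
      left
      rw [hm0, h]; simp
  · have hkl : k * l < 4 := by
      rw [hk, hl] at h4; push Not at h4; exact_mod_cast h4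
    have hk2 : k ≤ -2 := by omega
    have pα : 0 < ⟪αj, αj⟫ := real_inner_self_pos.mpr hα0
    have pγ : 0 < ⟪γ, γ⟫ := real_inner_self_pos.mpr hγ0
    have hl0 : l < 0 := by
      have h1 : cpair γ αj < 0 := by rw [hk]; exact_mod_cast (by omega : k < 0)
      have h2 : cpair αj γ < 0 := by
        unfold cpair at h1 ⊢
        rw [div_neg_iff] at h1 ⊢
        rw [real_inner_comm]
        rcases h1 with h1 | h1
        · linarith [h1.2]
        · exact Or.inr ⟨h1.1, pγ⟩
      rw [hl] at h2; exact_mod_cast h2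
    have hl1 : l = -1 := by nlinarith
    have hk3 : -3 ≤ k := by subst hl1; omega
    have hmem : γ + αj ∈ Φ := by
      have := hΦ.reflection_mem γ hγ αj hαΦ
      rw [hl, hl1] at this
      convert this using 1
      push_cast
      module
    right
    have hcase : (1 + m + k : ℤ) = -1 ∨ ((1 + m + k : ℤ) = -2 ∧ k = -3) := by omega
    rcases hcase with h | ⟨h, hk'⟩
    · rw [h]; convert hmem using 2; simp
    · rw [h]
      have := hΦ.reflection_mem αj hαΦ _ hmem
      rw [cpair_add, cpair_self hα0, hk, hk'] at this
      convert this using 1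
      push_cast
      module

end RootPaper
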